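/- Every antisymmetric 2-tensor ω on ℝ^7 decomposes uniquely as ω_{bc} = α^{a} φ_{abc} + ω'_{bc}, where α ∈ ℝ^7 and ω' is an antisymmetric 2-tensor satisfying ω'_{ab} φ^{ab}{}_{c} = 0 for all c. Consequently Λ²(ℝ^7) = Λ²₇ ⊕ Λ²₁₄, where Λ²₇ = {α ⌟ φ : α ∈ ℝ^7} has dimension 7 and Λ²₁₄ = {ω : ω_{ab} φ^{ab}{}_{c} = 0 for all c} has dimension 14. -/

import Mathlib

open scoped BigOperators

/-- Components of the standard G₂ 3-form `φ` on the seven ordered (0-indexed) index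
triples corresponding to `φ₁₂₃ = φ₁₄₅ = φ₁₆₇ = φ₂₄₆ = 1`, `φ₂₅₇ = φ₃₄₇ = φ₃₅₆ = -1`. -/
def phi0 : ℕ → ℕ → ℕ → ℝ
  | 0, 1, 2 => 1
  | 0, 3, 4 => 1
  | 0, 5, 6 => 1
  | 1, 3, 5 => 1
  | 1, 4, 6 => -1
  | 2, 3, 6 => -1
  | 2, 4, 5 => -1
  | _, _, _ => 0

/-- The standard G₂ 3-form `φ` on `ℝ⁷`, as a totally antisymmetric 3-tensor. -/
def phi (a b c : Fin 7) : ℝ :=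
  phi0 a.val b.val c.val - phi0 a.val c.val b.val + phi0 b.val c.val a.val
    - phi0 b.val a.val c.val + phi0 c.val a.val b.val - phi0 c.val b.val a.val

/-- The Levi-Civita symbol on seven indices, with `ε 1234567 = 1`. -/
noncomputable def eps (v : Fin 7 → Fin 7) : ℝ :=
  if h : Function.Bijective v then ((Equiv.Perm.sign (Equiv.ofBijective v h) : ℤ) : ℝ) else 0

/-- The 4-form `ψ = ⋆φ`, `ψ_{abcd} = (1/6) ε_{abcdmnp} φ^{mnp}`. -/
noncomputable def psi (a b c d : Fin 7) : ℝ :=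
  (1 / 6 : ℝ) * ∑ m : Fin 7, ∑ n : Fin 7, ∑ p : Fin 7,
    eps ![a, b, c, d, m, n, p] * phi m n p

/-- The Euclidean metric `g_{ab} = δ_{ab}` on `ℝ⁷`. -/
def gE (a b : Fin 7) : ℝ := if a = b then 1 else 0

/-- The space `Λ²(ℝ⁷)` of antisymmetric 2-tensors on `ℝ⁷`. -/
def Lam2 : Submodule ℝ (Matrix (Fin 7) (Fin 7) ℝ) where
  carrier := {ω | ∀ a b, ω b a = -ω a b}
  add_mem' := by
    intro x y hx hy a b
    simp only [Matrix.add_apply, hx a b, hy a b]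
    ring
  zero_mem' := by
    intro a b
    simp
  smul_mem' := by
    intro r x hx a b
    simp only [Matrix.smul_apply, hx a b, smul_eq_mul]
    ring

/-- The 7-dimensional component `Λ²₇ = {α ⌟ φ : α ∈ ℝ⁷}`. -/
def Lam2_7 : Submodule ℝ (Matrix (Fin 7) (Fin 7) ℝ) where
  carrier := {ω | ∃ α : Fin 7 → ℝ, ∀ b c, ω b c = ∑ a : Fin 7, α a * phi a b c}
  add_mem' := by
    rintro x y ⟨α, hα⟩ ⟨β, hβ⟩
    refine ⟨α + β, fun b c => ?_⟩
    simp only [Matrix.add_apply, hα b c, hβ b c, Pi.add_apply, add_mul,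
      Finset.sum_add_distrib]
  zero_mem' := by
    refine ⟨0, fun b c => ?_⟩
    simp
  smul_mem' := by
    rintro r x ⟨α, hα⟩
    refine ⟨r • α, fun b c => ?_⟩
    simp only [Matrix.smul_apply, hα b c, Pi.smul_apply, smul_eq_mul, Finset.mul_sum]
    exact Finset.sum_congr rfl fun a _ => by ring

/-- The 14-dimensional component `Λ²₁₄ = {ω ∈ Λ² : ω_{ab} φ^{ab}{}_c = 0}`. -/
def Lam2_14 : Submodule ℝ (Matrix (Fin 7) (Fin 7) ℝ) where
  carrier := {ω | (∀ a b, ω b a = -ω a b) ∧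
    ∀ c : Fin 7, ∑ a : Fin 7, ∑ b : Fin 7, ω a b * phi a b c = 0}
  add_mem' := by
    rintro x y ⟨hx, hx'⟩ ⟨hy, hy'⟩
    refine ⟨fun a b => ?_, fun c => ?_⟩
    · simp only [Matrix.add_apply, hx a b, hy a b]; ring
    · simp only [Matrix.add_apply, add_mul, Finset.sum_add_distrib, hx' c, hy' c, add_zero]
  zero_mem' := by
    refine ⟨fun a b => by simp, fun c => by simp⟩
  smul_mem' := by
    rintro r x ⟨hx, hx'⟩
    refine ⟨fun a b => ?_, fun c => ?_⟩
    · simp only [Matrix.smul_apply, hx a b, smul_eq_mul]; ring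
    · have : ∑ a : Fin 7, ∑ b : Fin 7, (r • x) a b * phi a b c
          = r * ∑ a : Fin 7, ∑ b : Fin 7, x a b * phi a b c := by
        simp only [Matrix.smul_apply, smul_eq_mul, Finset.mul_sum]
        exact Finset.sum_congr rfl fun a _ => Finset.sum_congr rfl fun b _ => by ring
      rw [this, hx' c, mul_zero]

def phi0Z : ℕ → ℕ → ℕ → ℤ
  | 0, 1, 2 => 1
  | 0, 3, 4 => 1
  | 0, 5, 6 => 1
  | 1, 3, 5 => 1
  | 1, 4, 6 => -1
  | 2, 3, 6 => -1
  | 2, 4, 5 => -1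
  | _, _, _ => 0

def phiZ (a b c : Fin 7) : ℤ :=
  phi0Z a.val b.val c.val - phi0Z a.val c.val b.val + phi0Z b.val c.val a.val
    - phi0Z b.val a.val c.val + phi0Z c.val a.val b.val - phi0Z c.val b.val a.val

theorem phi0_cast (a b c : ℕ) : phi0 a b c = (phi0Z a b c : ℝ) := by
  unfold phi0 phi0Z
  split <;> simp

theorem phi_cast (a b c : Fin 7) : phi a b c = (phiZ a b c : ℝ) := by
  simp only [phi, phiZ, phi0_cast]
  push_cast
  ring

theorem phi_antisymm (a b c : Fin 7) : phi a c b = -phi a b c := by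
  unfold phi; ring

set_option maxRecDepth 100000 in
theorem phiZ_contract : ∀ a d : Fin 7,
    ∑ b : Fin 7, ∑ c : Fin 7, phiZ a b c * phiZ b c d = if a = d then 6 else 0 := by
  decide +kernel

theorem phi_contract (a d : Fin 7) :
    ∑ b : Fin 7, ∑ c : Fin 7, phi a b c * phi b c d = if a = d then 6 else 0 := by
  simp only [phi_cast]
  exact_mod_cast phiZ_contract a d

theorem contract_alpha (α : Fin 7 → ℝ) (d : Fin 7) :
    ∑ b : Fin 7, ∑ c : Fin 7, (∑ a : Fin 7, α a * phi a b c) * phi b c d = 6 * α d := by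
  have h : ∑ b : Fin 7, ∑ c : Fin 7, (∑ a : Fin 7, α a * phi a b c) * phi b c d
      = ∑ a : Fin 7, α a * ∑ b : Fin 7, ∑ c : Fin 7, phi a b c * phi b c d := by
    simp only [Finset.sum_mul, Finset.mul_sum]
    rw [Finset.sum_comm' (t' := Finset.univ) (s' := fun _ => Finset.univ) (by simp)]
    rw [Finset.sum_comm]
    have : ∀ b : Fin 7, ∑ c : Fin 7, ∑ a : Fin 7, α a * phi a b c * phi b c d
        = ∑ a : Fin 7, ∑ c : Fin 7, α a * (phi a b c * phi b c d) := by
      intro b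
      rw [Finset.sum_comm]
      simp only [mul_assoc]
    simp only [this]
    rw [Finset.sum_comm]
  rw [h]
  simp only [phi_contract]
  simp [mul_comm]

theorem exists_unique_decomp (ω : Matrix (Fin 7) (Fin 7) ℝ) (hω : ∀ a b, ω b a = -ω a b) :
      ∃! p : (Fin 7 → ℝ) × Matrix (Fin 7) (Fin 7) ℝ,
        (∀ a b, p.2 b a = -p.2 a b) ∧
        (∀ c : Fin 7, ∑ a : Fin 7, ∑ b : Fin 7, p.2 a b * phi a b c = 0) ∧
        (∀ b c, ω b c = (∑ a : Fin 7, p.1 a * phi a b c) + p.2 b c) := by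
  let α : Fin 7 → ℝ := fun d => (∑ a : Fin 7, ∑ b : Fin 7, ω a b * phi a b d) / 6
  refine ⟨(α, fun b c => ω b c - ∑ a : Fin 7, α a * phi a b c), ⟨?_, ?_, ?_⟩, ?_⟩
  · intro a b
    simp only [hω a b, phi_antisymm _ a b, mul_neg, Finset.sum_neg_distrib]
    ring
  · intro c
    simp only [sub_mul, Finset.sum_sub_distrib]
    rw [contract_alpha]
    simp only [α]
    ring
  · intro b c
    simp
  · rintro ⟨β, η⟩ ⟨-, h2, h3⟩
    simp only at h2 h3
    have hβ : β = α := by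
      funext d
      simp only [α, h3, add_mul, Finset.sum_add_distrib, h2, contract_alpha]
      ring
    subst hβ
    refine Prod.ext rfl ?_
    funext b c
    simp only [h3 b c]
    ring

noncomputable def lam7Equiv : (Fin 7 → ℝ) ≃ₗ[ℝ] Lam2_7 :=
  LinearEquiv.ofBijective
    { toFun := fun α => ⟨fun b c => ∑ a : Fin 7, α a * phi a b c, α, fun _ _ => rfl⟩
      map_add' := by
        intro x y
        apply Subtype.ext
        funext b c
        change ∑ a : Fin 7, (x a + y a) * phi a b c
          = (∑ a : Fin 7, x a * phi a b c) + ∑ a : Fin 7, y a * phi a b c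
        simp only [add_mul, Finset.sum_add_distrib]
      map_smul' := by
        intro r x
        apply Subtype.ext
        funext b c
        change ∑ a : Fin 7, (r * x a) * phi a b c = r * ∑ a : Fin 7, x a * phi a b c
        simp only [Finset.mul_sum, mul_assoc] }
    (by
      constructor
      · intro x y h
        have h' : ∀ b c, ∑ a : Fin 7, x a * phi a b c = ∑ a : Fin 7, y a * phi a b c :=
          fun b c => congrFun (congrFun (congrArg Subtype.val h) b) c
        funext d
        have hx := contract_alpha x d
        simp only [h', contract_alpha] at hx
        linarith
      · rintro ⟨w, α, h⟩
        refine ⟨α, Subtype.ext ?_⟩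
        funext b c
        exact (h b c).symm)

abbrev UpIdx := {p : Fin 7 × Fin 7 // p.1 < p.2}

noncomputable def lam2Equiv : Lam2 ≃ₗ[ℝ] (UpIdx → ℝ) :=
  LinearEquiv.ofBijective
    { toFun := fun w p => w.1 p.1.1 p.1.2
      map_add' := by
        intro x y
        funext p
        simp
      map_smul' := by
        intro r x
        funext p
        simp }
    (by
      constructor
      · rintro ⟨x, hx⟩ ⟨y, hy⟩ h
        have h' : ∀ b c : Fin 7, b < c → x b c = y b c :=
          fun b c hbc => congrFun h ⟨(b, c), hbc⟩
        apply Subtype.ext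
        funext b c
        change x b c = y b c
        rcases lt_trichotomy b c with hl | he | hg
        · exact h' b c hl
        · subst he
          have h1 := hx b b
          have h2 := hy b b
          linarith
        · rw [hx c b, hy c b, h' c b hg]
      · intro f
        refine ⟨⟨fun b c => if h : b < c then f ⟨(b, c), h⟩
          else if h : c < b then - f ⟨(c, b), h⟩ else 0, ?_⟩, ?_⟩
        · intro a b
          rcases lt_trichotomy a b with hl | he | hg
          · simp [hl, hl.not_gt]
          · simp [he]
          · simp [hg, hg.not_gt]
        · funext p
          simp [p.2])

theorem lam2_finrank : Module.finrank ℝ Lam2 = 21 := by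
  rw [lam2Equiv.finrank_eq, Module.finrank_fintype_fun_eq_card]
  decide +kernel

theorem lam7_finrank : Module.finrank ℝ Lam2_7 = 7 := by
  rw [← lam7Equiv.finrank_eq]
  simp

theorem lam_sup : Lam2_7 ⊔ Lam2_14 = Lam2 := by
  apply le_antisymm
  · apply sup_le
    · rintro w ⟨α, h⟩ a b
      simp only [h, phi_antisymm _ a b, mul_neg, Finset.sum_neg_distrib]
    · rintro w ⟨h, -⟩
      exact h
  · intro w hw
    obtain ⟨⟨α, η⟩, ⟨h1, h2, h3⟩, -⟩ := exists_unique_decomp w hw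
    refine Submodule.mem_sup.2 ⟨fun b c => ∑ a : Fin 7, α a * phi a b c,
      ⟨α, fun _ _ => rfl⟩, η, ⟨h1, h2⟩, ?_⟩
    funext b c
    exact (h3 b c).symm

theorem lam_inf : Lam2_7 ⊓ Lam2_14 = ⊥ := by
  rw [eq_bot_iff]
  rintro w ⟨⟨α, h⟩, -, h2⟩
  have hα : ∀ d, α d = 0 := by
    intro d
    have := h2 d
    simp only [h, contract_alpha] at this
    linarith
  rw [Submodule.mem_bot]
  funext b c
  change w b c = 0
  simp [h, hα]

theorem lam14_finrank : Module.finrank ℝ Lam2_14 = 14 := by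
  have h := Submodule.finrank_sup_add_finrank_inf_eq Lam2_7 Lam2_14
  rw [lam_sup, lam_inf, lam2_finrank, lam7_finrank, finrank_bot] at h
  omega

/-- Every antisymmetric 2-tensor `ω` on `ℝ⁷` decomposes uniquely as
`ω_{bc} = α^a φ_{abc} + ω'_{bc}` with `ω' ∈ Λ²₁₄`; consequently
`Λ² = Λ²₇ ⊕ Λ²₁₄`, with `dim Λ²₇ = 7` and `dim Λ²₁₄ = 14`. -/
theorem lam2_decomposition :
    (∀ ω : Matrix (Fin 7) (Fin 7) ℝ, (∀ a b, ω b a = -ω a b) →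
      ∃! p : (Fin 7 → ℝ) × Matrix (Fin 7) (Fin 7) ℝ,
        (∀ a b, p.2 b a = -p.2 a b) ∧
        (∀ c : Fin 7, ∑ a : Fin 7, ∑ b : Fin 7, p.2 a b * phi a b c = 0) ∧
        (∀ b c, ω b c = (∑ a : Fin 7, p.1 a * phi a b c) + p.2 b c)) ∧
    Lam2_7 ⊔ Lam2_14 = Lam2 ∧ Lam2_7 ⊓ Lam2_14 = ⊥ ∧
    Module.finrank ℝ Lam2_7 = 7 ∧ Module.finrank ℝ Lam2_14 = 14 := by
  exact ⟨exists_unique_decomp, lam_sup, lam_inf, lam7_finrank, lam14_finrank⟩
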